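/- Single-hop greedy bound from the proof of Theorem 3.5: Let n : ℕ be even, let c > 0 be a real, and define m : Fin n → ℝ by m v = c/2 if (v : ℕ) is even and m v = 3c/2 if (v : ℕ) is odd (one row of the chessboard demand matrix, whose total is ∑_v m v = c·n). Then for every ĉ : Fin n → ℕ with ∑_v ĉ v ≤ n (at most n outgoing links allocated from the node), the total demand of the row that can be satisfied on single-hop paths satisfies ∑_v min (c · ĉ v) (m v) ≤ (3/4) · c · n. (That is, by greedily adding links between source-destination pairs, at most 3/4 of the total demand from each row of the chessboard matrix can be satisfied in a single hop, so at least 1/4 of it requires paths of at least 2 hops.) -/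

import Mathlib

/-- A sum alternating between `0` and `a` over an even number `k + k` of terms equals `k * a`. -/
lemma sum_range_ite_even (a : ℝ) (k : ℕ) :
    ∑ i ∈ Finset.range (k + k), (if Even i then 0 else a) = k * a := by
  induction k with
  | zero => simp
  | succ k ih =>
    rw [show k + 1 + (k + 1) = k + k + 1 + 1 by ring, Finset.sum_range_succ,
      Finset.sum_range_succ, ih, if_pos ⟨k, rfl⟩,
      if_neg (Nat.not_even_iff_odd.2 (Even.add_one ⟨k, rfl⟩))]
    push_cast
    ring

/-- The demand served by `k` links is at most `c / 2` per link, plus `c / 2` for a node of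
high demand. -/
lemma min_mul_chessboard_le {c : ℝ} (hc : 0 < c) (k : ℕ) (p : Prop) [Decidable p] :
    min (c * k) (if p then c / 2 else 3 * c / 2) ≤ c / 2 * k + if p then 0 else c / 2 := by
  rcases k with _ | _ | k
  · refine (min_le_left _ _).trans ?_
    split_ifs <;> simp [(half_pos hc).le]
  · split_ifs
    · exact (min_le_right _ _).trans (by simp)
    · exact (min_le_left _ _).trans (by simp)
  · have hk : 0 ≤ c * k := by positivity
    refine (min_le_right _ _).trans ?_
    push_cast
    split_ifs <;> linarith

/-- Single-hop greedy bound from the proof of Theorem 3.5: for one row of the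
chessboard demand matrix (alternating `c/2` and `3c/2`, totalling `c·n`), any
allocation of at most `n` outgoing direct links can deliver at most `3/4` of
the row's total demand `c·n` on single-hop paths. -/
theorem chessboard_single_hop_bound (n : ℕ) (hne : Even n)
    (c : ℝ) (hc : 0 < c) (m : Fin n → ℝ)
    (hm : ∀ v : Fin n, m v = if Even (v : ℕ) then c / 2 else 3 * c / 2)
    (chat : Fin n → ℕ) (h : ∑ v, chat v ≤ n) :
    ∑ v, min (c * (chat v : ℝ)) (m v) ≤ (3 / 4) * c * n := by
  obtain ⟨k, rfl⟩ := hne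
  have hcard : (∑ v, (chat v : ℝ)) ≤ ((k + k : ℕ) : ℝ) := by exact_mod_cast h
  calc ∑ v, min (c * (chat v : ℝ)) (m v)
      ≤ ∑ v, (c / 2 * (chat v : ℝ) + if Even (v : ℕ) then 0 else c / 2) :=
        Finset.sum_le_sum fun v _ => hm v ▸ min_mul_chessboard_le hc (chat v) _
    _ = c / 2 * ∑ v, (chat v : ℝ) + k * (c / 2) := by
        rw [Finset.sum_add_distrib, Finset.mul_sum,
          Fin.sum_univ_eq_sum_range (fun i => if Even i then 0 else c / 2), sum_range_ite_even]
    _ ≤ c / 2 * ((k + k : ℕ) : ℝ) + k * (c / 2) := by gcongr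
    _ = (3 / 4) * c * ((k + k : ℕ) : ℝ) := by
        push_cast
        ring
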